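/- Let m ≥ 2 be an integer and let l̃ be the Lawlor neck profile curve. Then for every s ∈ (−π/(2(m−1)), π/(2(m−1))): (i) l̃(s)^{m−1} = 1 + i·tan((m−1)s), so in particular Re(l̃(s)^{m−1}) = 1; (ii) l̃'(s)·l̃(s)^{m−2} = i / cos²((m−1)s), which is purely imaginary with positive imaginary part. Consequently arg(l̃'(s)) + (m−2)·arg(l̃(s)) ≡ π/2 is constant, i.e. l̃ satisfies the scalar form of the special Lagrangian profile-curve equation κ⃗_γ − (m−2)γ^⊥/|γ|² = 0 (the case a = 0). -/

import Mathlib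

open Complex Real

/-- The Lawlor neck profile curve
`l̃(s) = (cos((m−1)s))^{−1/(m−1)}·e^{is}` on `(−π/(2(m−1)), π/(2(m−1)))`. -/
noncomputable def lawlor (m : ℕ) (s : ℝ) : ℂ :=
  ((Real.cos (((m : ℝ) - 1) * s) ^ (-(1 : ℝ) / ((m : ℝ) - 1)) : ℝ) : ℂ)
    * Complex.exp ((s : ℂ) * Complex.I)

theorem lawlor_pow_aux (n : ℕ) (s : ℝ) (hc : 0 < Real.cos (((n : ℝ) + 1) * s)) :
    lawlor (n + 2) s ^ (n + 1) = 1 + (Real.tan (((n : ℝ) + 1) * s) : ℂ) * Complex.I := by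
  have e : (((n + 2 : ℕ) : ℝ) - 1) = (n : ℝ) + 1 := by push_cast; ring
  have hn : ((n : ℝ) + 1) ≠ 0 := by positivity
  unfold lawlor
  rw [e, mul_pow, ← Complex.exp_nat_mul, ← Complex.ofReal_pow, ← Real.rpow_natCast,
    ← Real.rpow_mul hc.le]
  have e2 : (-1 / ((n : ℝ) + 1)) * ((n + 1 : ℕ) : ℝ) = -1 := by
    push_cast; field_simp
  have e3 : (((n + 1 : ℕ) : ℂ)) * ((s : ℂ) * Complex.I)
      = ((((n : ℝ) + 1) * s : ℝ) : ℂ) * Complex.I := by push_cast; ring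
  rw [e2, e3, Complex.exp_mul_I, Real.rpow_neg_one, Real.tan_eq_sin_div_cos,
    ← Complex.ofReal_cos, ← Complex.ofReal_sin, Complex.ofReal_inv, Complex.ofReal_div]
  have h : ((Real.cos (((n : ℝ) + 1) * s) : ℝ) : ℂ) ≠ 0 := by exact_mod_cast hc.ne'
  field_simp

theorem lawlor_diff_aux (n : ℕ) (s : ℝ) (hc : 0 < Real.cos (((n : ℝ) + 1) * s)) :
    DifferentiableAt ℝ (lawlor (n + 2)) s := by
  have e : (((n + 2 : ℕ) : ℝ) - 1) = (n : ℝ) + 1 := by push_cast; ring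
  unfold lawlor
  rw [e]
  have h1 : DifferentiableAt ℝ
      (fun s : ℝ => Real.cos (((n : ℝ) + 1) * s) ^ (-(1 : ℝ) / ((n : ℝ) + 1))) s :=
    DifferentiableAt.rpow_const (by fun_prop) (Or.inl hc.ne')
  have h2 := h1.hasDerivAt.ofReal_comp.differentiableAt
  have h3 : DifferentiableAt ℝ (fun s : ℝ => (s : ℂ)) s :=
    Complex.ofRealCLM.differentiableAt
  exact h2.mul ((h3.mul_const _).cexp)

theorem lawlor_deriv_aux (n : ℕ) (s : ℝ) (hc : 0 < Real.cos (((n : ℝ) + 1) * s)) :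
    deriv (lawlor (n + 2)) s * lawlor (n + 2) s ^ n
      = Complex.I / ((Real.cos (((n : ℝ) + 1) * s) ^ 2 : ℝ) : ℂ) := by
  have h1 := (lawlor_diff_aux n s hc).hasDerivAt.pow (n + 1)
  have h2 : HasDerivAt (fun s : ℝ => Real.tan (((n : ℝ) + 1) * s))
      (1 / Real.cos (((n : ℝ) + 1) * s) ^ 2 * (((n : ℝ) + 1) * 1)) s :=
    (Real.hasDerivAt_tan hc.ne').comp s ((hasDerivAt_id s).const_mul ((n : ℝ) + 1))
  have h3 := (h2.ofReal_comp.mul_const Complex.I).const_add 1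
  have hev : ∀ᶠ t in nhds s, 0 < Real.cos (((n : ℝ) + 1) * t) :=
    (show Continuous fun t : ℝ => Real.cos (((n : ℝ) + 1) * t) by fun_prop).continuousAt.eventually
      (lt_mem_nhds hc)
  have h4 := h3.congr_of_eventuallyEq (f₁ := lawlor (n + 2) ^ (n + 1)) (by
    filter_upwards [hev] with t ht
    simpa using lawlor_pow_aux n t ht)
  have h5 := h1.unique h4
  have hn : ((n : ℂ) + 1) ≠ 0 := by exact_mod_cast Nat.succ_ne_zero n
  apply mul_left_cancel₀ hn
  simp only [Nat.add_sub_cancel] at h5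
  push_cast at h5 ⊢
  linear_combination h5

/-- For the Lawlor neck profile curve `l̃`:
(i) `l̃(s)^{m−1} = 1 + i·tan((m−1)s)`, so `Re(l̃(s)^{m−1}) = 1`;
(ii) `l̃'(s)·l̃(s)^{m−2} = i/cos²((m−1)s)`, purely imaginary with positive imaginary
part; consequently `arg(l̃'(s)) + (m−2)·arg(l̃(s)) ≡ π/2 (mod 2π)`, i.e. `l̃` satisfies
the scalar form of the special Lagrangian profile-curve equation (case `a = 0`). -/
theorem lawlor_profile_curve
    (m : ℕ) (hm : 2 ≤ m) (s : ℝ)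
    (hs : s ∈ Set.Ioo (-(π / (2 * ((m : ℝ) - 1)))) (π / (2 * ((m : ℝ) - 1)))) :
    lawlor m s ^ (m - 1) = 1 + (Real.tan (((m : ℝ) - 1) * s) : ℂ) * Complex.I ∧
    (lawlor m s ^ (m - 1)).re = 1 ∧
    deriv (lawlor m) s * lawlor m s ^ (m - 2)
      = Complex.I / ((Real.cos (((m : ℝ) - 1) * s) ^ 2 : ℝ) : ℂ) ∧
    (deriv (lawlor m) s * lawlor m s ^ (m - 2)).re = 0 ∧
    0 < (deriv (lawlor m) s * lawlor m s ^ (m - 2)).im ∧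
    ∃ k : ℤ, Complex.arg (deriv (lawlor m) s) + ((m : ℝ) - 2) * Complex.arg (lawlor m s)
      = π / 2 + 2 * π * k := by
  obtain ⟨n, rfl⟩ := Nat.exists_eq_add_of_le' hm
  have e : (((n + 2 : ℕ) : ℝ) - 1) = (n : ℝ) + 1 := by push_cast; ring
  have e' : (((n + 2 : ℕ) : ℝ) - 2) = (n : ℝ) := by push_cast; ring
  have hn : 0 < ((n : ℝ) + 1) := by positivity
  rw [e] at hs ⊢
  rw [e', show n + 2 - 1 = n + 1 from rfl, show n + 2 - 2 = n from rfl]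
  have hq : ((n : ℝ) + 1) * (π / (2 * ((n : ℝ) + 1))) = π / 2 := by field_simp
  have hc : 0 < Real.cos (((n : ℝ) + 1) * s) := by
    apply Real.cos_pos_of_mem_Ioo
    constructor
    · have := mul_lt_mul_of_pos_left hs.1 hn
      linarith
    · have := mul_lt_mul_of_pos_left hs.2 hn
      linarith
  have hp := lawlor_pow_aux n s hc
  have hd := lawlor_deriv_aux n s hc
  have hd' : deriv (lawlor (n + 2)) s * lawlor (n + 2) s ^ n
      = (((Real.cos (((n : ℝ) + 1) * s) ^ 2)⁻¹ : ℝ) : ℂ) * Complex.I := by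
    rw [hd, Complex.ofReal_inv]; ring
  have hpos : 0 < (Real.cos (((n : ℝ) + 1) * s) ^ 2)⁻¹ := by positivity
  refine ⟨hp, ?_, hd, ?_, ?_, ?_⟩
  · rw [hp, Complex.add_re, Complex.re_ofReal_mul]; simp
  · rw [hd', Complex.re_ofReal_mul]; simp
  · rw [hd', Complex.im_ofReal_mul]; simpa using hpos
  · have hne : deriv (lawlor (n + 2)) s * lawlor (n + 2) s ^ n ≠ 0 := by
      rw [hd']
      exact mul_ne_zero (by exact_mod_cast hpos.ne') Complex.I_ne_zero
    have ha : Complex.arg (deriv (lawlor (n + 2)) s * lawlor (n + 2) s ^ n) = π / 2 := by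
      rw [hd', Complex.arg_real_mul _ hpos, Complex.arg_I]
    have hb := Complex.arg_mul_coe_angle (left_ne_zero_of_mul hne) (right_ne_zero_of_mul hne)
    rw [ha, Complex.arg_pow_coe_angle, ← Real.Angle.natCast_mul_eq_nsmul,
      ← Real.Angle.coe_add] at hb
    obtain ⟨k, hk⟩ := Real.Angle.angle_eq_iff_two_pi_dvd_sub.1 hb.symm
    exact ⟨k, by linarith⟩
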